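/- There exists θ in C^∞(T^2; R) such that Δθ = 0 on T^2 \ B(x_0, r_0) and |∇θ(x)| > 0 for all x in T^2 \ B(x_0, r_0). Moreover, since ∇θ is nonvanishing on T^2 \ B(x_0,r_0), its winding number (index) along the circle S(x_0, r_0) equals 0, and hence ∇θ restricted to T^2 \ B(x_0,r_0) extends to a smooth nonvanishing vector field on all of T^2. -/

import Mathlib

/-- Euclidean norm of a planar vector. -/
noncomputable def nrm2 (v : ℝ × ℝ) : ℝ := Real.sqrt (v.1 ^ 2 + v.2 ^ 2)

/-- Gradient of a function of two real variables. -/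
noncomputable def grad2 (θ : ℝ × ℝ → ℝ) (x : ℝ × ℝ) : ℝ × ℝ :=
  (deriv (fun u => θ (u, x.2)) x.1, deriv (fun u => θ (x.1, u)) x.2)

/-- Laplacian of a function of two real variables. -/
noncomputable def lap2 (θ : ℝ × ℝ → ℝ) (x : ℝ × ℝ) : ℝ :=
  deriv (fun u => deriv (fun u' => θ (u', x.2)) u) x.1
    + deriv (fun u => deriv (fun u' => θ (x.1, u')) u) x.2

/-- `x` lies outside the ball `B(x₀, r₀)` of the torus (all `ℤ²`-translates are far). -/
noncomputable def outsideBall (x₀ : ℝ × ℝ) (r₀ : ℝ) (x : ℝ × ℝ) : Prop :=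
  ∀ k l : ℤ, r₀ ≤ nrm2 (x.1 - x₀.1 - k, x.2 - x₀.2 - l)


open Complex in
noncomputable def sF (z : ℂ) : ℝ := Real.sin (Real.pi * z.re) ^ 2 + Real.sin (Real.pi * z.im) ^ 2

noncomputable def tF (n : ℤ) (z : ℂ) : ℂ := -(1 / (Complex.sin (Real.pi * (z + n * Complex.I))) ^ 2)

noncomputable def hF (z : ℂ) : ℂ := ∑' n : ℤ, tF n z

lemma abs_le_abs_sinh (t : ℝ) : |t| ≤ |Real.sinh t| := by
  rw [Real.abs_sinh]
  exact Real.self_le_sinh_iff.2 (abs_nonneg t)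

lemma sin_int_shift_sq (t : ℝ) (n : ℤ) :
    Real.sin (Real.pi * (t + n)) ^ 2 = Real.sin (Real.pi * t) ^ 2 := by
  have : Real.pi * (t + n) = Real.pi * t + n * Real.pi := by ring
  rw [this, Real.sin_add_int_mul_pi]
  rw [mul_pow]
  have : ((-1 : ℝ) ^ n) ^ 2 = 1 := by
    rcases Int.even_or_odd n with h | h
    · simp [h.neg_one_zpow]
    · simp [h.neg_one_zpow]
  rw [this, one_mul]

lemma norm_sin_sq (z : ℂ) : ‖Complex.sin z‖ ^ 2 = Real.sin z.re ^ 2 + Real.sinh z.im ^ 2 := by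
  rw [← Complex.normSq_eq_norm_sq, Complex.normSq_apply]
  have : Complex.sin z = Complex.sin (z.re + z.im * Complex.I) := by rw [Complex.re_add_im]
  rw [this, Complex.sin_add_mul_I]
  have e : Complex.sin z.re * Complex.cosh z.im + Complex.cos z.re * Complex.sinh z.im * Complex.I
    = ((Real.sin z.re * Real.cosh z.im : ℝ) : ℂ) + ((Real.cos z.re * Real.sinh z.im : ℝ) : ℂ) * Complex.I := by
    push_cast; ring
  rw [e]
  simp only [Complex.add_re, Complex.ofReal_re, Complex.mul_re, Complex.I_re, Complex.ofReal_im, Complex.I_im, Complex.add_im, Complex.mul_im]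
  have h1 := Real.sin_sq_add_cos_sq z.re
  have h2 := Real.cosh_sq z.im
  have h3 : Real.cos z.re ^ 2 = 1 - Real.sin z.re ^ 2 := by linarith
  ring_nf
  rw [h2, h3]
  ring

lemma D_ge (n : ℤ) (z : ℂ) : sF z ≤ ‖Complex.sin (Real.pi * (z + n * Complex.I))‖ ^ 2 ∧
    (z.im + n) ^ 2 ≤ ‖Complex.sin (Real.pi * (z + n * Complex.I))‖ ^ 2 := by
  rw [norm_sin_sq]
  have hre : (Real.pi * (z + n * Complex.I) : ℂ).re = Real.pi * z.re := by simp
  have him : (Real.pi * (z + n * Complex.I) : ℂ).im = Real.pi * (z.im + n) := by simp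
  rw [hre, him]
  have h := abs_le_abs_sinh (Real.pi * (z.im + n))
  have h' := sq_le_sq.2 h
  have h1 : Real.sin (Real.pi * (z.im + n)) ^ 2 ≤ (Real.pi * (z.im + n)) ^ 2 :=
    sq_le_sq.2 (Real.abs_sin_le_abs)
  rw [sin_int_shift_sq] at h1
  unfold sF
  constructor
  · linarith
  · have : (1:ℝ) ≤ Real.pi ^ 2 := by nlinarith [Real.pi_gt_three]
    nlinarith [sq_nonneg (Real.sin (Real.pi * z.re)), sq_nonneg (z.im + n)]

lemma tF_bound {R δ : ℝ} (hδ : 0 < δ) (n : ℤ) (z : ℂ) (hR : |z.im| ≤ R) (hz : δ ≤ sF z) :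
    ‖tF n z‖ ≤ (1 / δ + 2 + 2 * R ^ 2 / δ) * (1 / (1 + (n:ℝ) ^ 2)) := by
  obtain ⟨h1, h2⟩ := D_ge n z
  unfold tF
  rw [norm_neg, norm_div, norm_one, norm_pow]
  set D := ‖Complex.sin (Real.pi * (z + n * Complex.I))‖ ^ 2
  have hD : δ ≤ D := hz.trans h1
  have hD0 : 0 < D := hδ.trans_le hD
  rw [mul_one_div, div_le_div_iff₀ hD0 (by positivity), one_mul]
  have hb : z.im ^ 2 ≤ R ^ 2 := sq_le_sq.2 (hR.trans (le_abs_self R))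
  have hq : 1 ≤ D / δ := by rwa [le_div_iff₀ hδ, one_mul]
  have e : (1 / δ + 2 + 2 * R ^ 2 / δ) * D = D / δ + 2 * D + 2 * R ^ 2 * (D / δ) := by
    field_simp
  rw [e]
  nlinarith [sq_nonneg (2 * z.im + n), mul_nonneg (sq_nonneg R) (sub_nonneg.2 hq)]

lemma sum_bound : Summable (fun n : ℤ => 1 / (1 + (n:ℝ) ^ 2)) := by
  have h := (Real.summable_one_div_int_pow (p := 2)).2 (by norm_num)
  have h2 := Summable.of_norm_bounded_eventually h (f := fun n : ℤ => 1 / (1 + (n:ℝ) ^ 2)) ?_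
  · exact h2
  · have : {0}ᶜ ∈ (Filter.cofinite : Filter ℤ) := (Set.finite_singleton 0).compl_mem_cofinite
    filter_upwards [this] with n hn
    have hn : (n:ℝ) ≠ 0 := by simpa using hn
    rw [Real.norm_of_nonneg (by positivity)]
    apply one_div_le_one_div_of_le (by positivity); linarith

lemma tF_summable (z : ℂ) (hz : 0 < sF z) : Summable (fun n => tF n z) :=
  Summable.of_norm_bounded (sum_bound.mul_left _) (fun n => tF_bound hz n z le_rfl le_rfl)

lemma sF_cont : Continuous sF := by unfold sF; fun_prop

lemma sin_ne (n : ℤ) (z : ℂ) (hz : 0 < sF z) : Complex.sin (Real.pi * (z + n * Complex.I)) ≠ 0 := by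
  intro h
  have := (D_ge n z).1
  rw [h] at this
  simp at this
  linarith

lemma hF_diff (z : ℂ) (hz : 0 < sF z) : DifferentiableAt ℂ hF z := by
  set U : Set ℂ := {w | |w.im| < |z.im| + 1 ∧ sF z / 2 < sF w}
  have hU : IsOpen U := by
    apply IsOpen.inter
    · exact isOpen_lt (Complex.continuous_im.abs) continuous_const
    · exact isOpen_lt continuous_const sF_cont
  have hzU : z ∈ U := ⟨by linarith, by linarith⟩
  refine DifferentiableOn.differentiableAt (s := U) ?_ (hU.mem_nhds hzU)
  refine Complex.differentiableOn_tsum_of_summable_norm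
    (sum_bound.mul_left (1 / (sF z / 2) + 2 + 2 * (|z.im| + 1) ^ 2 / (sF z / 2))) ?_ hU ?_
  · intro n w hw
    have := sin_ne n w (by linarith [hw.2])
    apply DifferentiableAt.differentiableWithinAt
    unfold tF
    have h2 : Complex.sin (Real.pi * (w + n * Complex.I)) ^ 2 ≠ 0 := pow_ne_zero _ this
    fun_prop (disch := assumption)
  · intro n w hw
    exact tF_bound (by linarith) n w hw.1.le hw.2.le

lemma sF_add_one (z : ℂ) : sF (z + 1) = sF z := by
  have := sin_int_shift_sq z.re 1
  unfold sF; push_cast at this; simp [this]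

lemma sF_add_I (z : ℂ) : sF (z + Complex.I) = sF z := by
  have := sin_int_shift_sq z.im 1
  unfold sF; push_cast at this; simp [this]

lemma hF_add_one (z : ℂ) : hF (z + 1) = hF z := by
  unfold hF
  congr 1; ext n
  unfold tF
  have : (Real.pi * (z + 1 + n * Complex.I) : ℂ) = Real.pi * (z + n * Complex.I) + Real.pi := by ring
  rw [this, Complex.sin_add_pi, neg_sq]

lemma hF_add_I (z : ℂ) : hF (z + Complex.I) = hF z := by
  unfold hF
  rw [← (Equiv.addRight (1:ℤ)).tsum_eq (fun n => tF n z)]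
  congr 1; ext n
  unfold tF
  simp only [Equiv.coe_addRight]
  push_cast
  ring_nf

lemma hF_conj (z : ℂ) : (starRingEnd ℂ) (hF z) = hF ((starRingEnd ℂ) z) := by
  unfold hF
  rw [Complex.conj_tsum, ← (Equiv.neg ℤ).tsum_eq]
  congr 1; ext n
  unfold tF
  simp [← Complex.sin_conj]

lemma hF_neg (z : ℂ) : hF (-z) = hF z := by
  unfold hF
  rw [← (Equiv.neg ℤ).tsum_eq]
  congr 1; ext n
  unfold tF
  have : (Real.pi * (-z + ((Equiv.neg ℤ) n : ℤ) * Complex.I) : ℂ) = -(Real.pi * (z + n * Complex.I)) := by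
    simp; ring
  rw [this, Complex.sin_neg, neg_sq]

lemma hF_real_H (x : ℝ) : (hF (x + (1/2) * Complex.I)).im = 0 := by
  rw [← Complex.conj_eq_iff_im, hF_conj]
  rw [← hF_add_I]
  congr 1
  apply Complex.ext <;> simp <;> norm_num

lemma hF_real_V (y : ℝ) : (hF (1/2 + y * Complex.I)).im = 0 := by
  rw [← Complex.conj_eq_iff_im, hF_conj]
  rw [← hF_neg, ← hF_add_one]
  congr 1
  apply Complex.ext <;> simp <;> norm_num

lemma sF_H (x : ℝ) : 0 < sF (x + (1/2) * Complex.I) := by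
  unfold sF
  simp
  have : Real.pi * 2⁻¹ = Real.pi / 2 := by ring
  rw [this, Real.sin_pi_div_two]
  positivity

lemma sF_V (y : ℝ) : 0 < sF (1/2 + y * Complex.I) := by
  unfold sF
  simp
  have : Real.pi * 2⁻¹ = Real.pi / 2 := by ring
  rw [this, Real.sin_pi_div_two]
  positivity

lemma hF_V_nonpos (y : ℝ) : (hF (1/2 + y * Complex.I)).re ≤ 0 := by
  unfold hF
  rw [Complex.re_tsum (tF_summable _ (sF_V y))]
  apply tsum_nonpos
  intro n
  unfold tF
  have : (Real.pi * (1/2 + y * Complex.I + n * Complex.I) : ℂ) = ((Real.pi * (y + n) : ℝ) : ℂ) * Complex.I + Real.pi / 2 := by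
    push_cast; ring
  rw [this, Complex.sin_add_pi_div_two, Complex.cos_mul_I, ← Complex.ofReal_cosh]
  have : (-(1 / (Real.cosh (Real.pi * (y + n)) : ℂ) ^ 2)) = ((-(1 / Real.cosh (Real.pi * (y + n)) ^ 2) : ℝ) : ℂ) := by
    push_cast; rfl
  rw [this, Complex.ofReal_re]
  have : 0 ≤ 1 / Real.cosh (Real.pi * (y + n)) ^ 2 := by positivity
  linarith

lemma hF_H_pos : 0 < (hF ((0:ℝ) + (1/2) * Complex.I)).re := by
  have hs := tF_summable _ (sF_H 0)
  unfold hF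
  rw [Complex.re_tsum hs]
  have key : ∀ n : ℤ, (tF n ((0:ℝ) + (1/2) * Complex.I)).re = 1 / Real.sinh (Real.pi * (1/2 + n)) ^ 2 := by
    intro n
    unfold tF
    have : (Real.pi * ((0:ℝ) + (1/2) * Complex.I + n * Complex.I) : ℂ) = ((Real.pi * (1/2 + n) : ℝ) : ℂ) * Complex.I := by
      push_cast; ring
    rw [this, Complex.sin_mul_I, ← Complex.ofReal_sinh, mul_pow, Complex.I_sq]
    have : (-(1 / ((Real.sinh (Real.pi * (1/2 + n)) : ℂ) ^ 2 * -1))) = ((1 / Real.sinh (Real.pi * (1/2 + n)) ^ 2 : ℝ) : ℂ) := by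
      push_cast; rw [mul_neg_one, div_neg, neg_neg]
    rw [this, Complex.ofReal_re]
  refine (Complex.hasSum_re hs.hasSum).summable.tsum_pos (fun n => ?_) 0 ?_
  · rw [key]; positivity
  · rw [key]
    have : 0 < Real.sinh (Real.pi * (1/2 + (0:ℤ))) := by
      rw [Real.sinh_pos_iff]; have := Real.pi_pos; simp; positivity
    positivity

lemma lap_lower (v : ℝ → ℝ) (hv : Continuous v) (x0 : ℝ) (hx0 : x0 ∈ Set.Icc (0:ℝ) 1)
    (h0 : v x0 = 0) (δ : ℝ) (hδ : 0 < δ) :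
    ∃ a > 0, ∀ L : ℝ, 0 ≤ L → a * Real.exp (-L * δ) ≤ ∫ x in (0:ℝ)..1, Real.exp (-L * v x) := by
  obtain ⟨η, hη, hb⟩ := Metric.continuous_iff.1 hv x0 δ hδ
  set p := max 0 (x0 - η / 2)
  set q := min 1 (x0 + η / 2)
  have hpq : p < q := by
    obtain ⟨h1, h2⟩ := hx0
    refine lt_min (max_lt ?_ ?_) (max_lt ?_ ?_) <;> linarith
  have hp : 0 ≤ p := le_max_left _ _
  have hq : q ≤ 1 := min_le_left _ _
  have hp' : x0 - η / 2 ≤ p := le_max_right _ _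
  have hq' : q ≤ x0 + η / 2 := min_le_right _ _
  refine ⟨q - p, by linarith, fun L hL => ?_⟩
  have hc : Continuous (fun x => Real.exp (-L * v x)) := by fun_prop
  calc (q - p) * Real.exp (-L * δ) = ∫ x in p..q, Real.exp (-L * δ) := by simp
    _ ≤ ∫ x in p..q, Real.exp (-L * v x) := by
        apply intervalIntegral.integral_mono_on hpq.le (by simp) (hc.intervalIntegrable _ _)
        intro x hx
        have : dist (v x) (v x0) < δ := hb x (by rw [Real.dist_eq, abs_lt]; constructor <;> linarith [hx.1, hx.2])
        rw [h0, Real.dist_eq, sub_zero, abs_lt] at this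
        apply Real.exp_le_exp.2
        nlinarith
    _ ≤ _ := by
        apply intervalIntegral.integral_mono_interval hp hpq.le hq
        · exact Filter.Eventually.of_forall fun x => (Real.exp_pos _).le
        · exact hc.intervalIntegrable _ _

lemma lap_main (v : ℝ → ℝ) (hv : Continuous v) (hv0 : ∀ x ∈ Set.Icc (0:ℝ) 1, 0 ≤ v x)
    (x0 : ℝ) (hx0 : x0 ∈ Set.Icc (0:ℝ) 1)
    (h0 : v x0 = 0) (τ ε : ℝ) (hε : 0 < ε) :
    ∀ᶠ L : ℝ in Filter.atTop, ‖(∫ x in (0:ℝ)..1, Complex.exp (-(L + τ * Complex.I) * v x)) -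
      ((∫ x in (0:ℝ)..1, Real.exp (-L * v x) : ℝ) : ℂ)‖ ≤ ε * ∫ x in (0:ℝ)..1, Real.exp (-L * v x) := by
  set δ := ε / (2 * (|τ| + 1)) with hδd
  have hδ : 0 < δ := by positivity
  obtain ⟨a, ha, hlow⟩ := lap_lower v hv x0 hx0 h0 (δ / 2) (by positivity)
  have ht : Filter.Tendsto (fun L : ℝ => Real.exp (-(L * (δ / 2)))) Filter.atTop (nhds 0) :=
    Real.tendsto_exp_neg_atTop_nhds_zero.comp
      (Filter.tendsto_id.atTop_mul_const (by positivity))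
  filter_upwards [Filter.eventually_ge_atTop 0, ht.eventually_le_const (show 0 < ε * a / 4 by positivity)] with L hL hsmall
  have hl := hlow L hL
  set Z := ∫ x in (0:ℝ)..1, Real.exp (-L * v x) with hZ
  have hc : Continuous (fun x => Real.exp (-L * v x)) := by fun_prop
  have hc2 : Continuous (fun x => Complex.exp (-(L + τ * Complex.I) * v x)) := by fun_prop
  have hc3 : Continuous (fun x => ((Real.exp (-L * v x) : ℝ) : ℂ)) := Complex.continuous_ofReal.comp hc
  rw [hZ, ← intervalIntegral.integral_ofReal, ← intervalIntegral.integral_sub (hc2.intervalIntegrable _ _)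
    (hc3.intervalIntegrable _ _)]
  have hpt : ∀ x ∈ Set.Icc (0:ℝ) 1, ‖Complex.exp (-(L + τ * Complex.I) * v x) - (Real.exp (-L * v x) : ℝ)‖
      ≤ |τ| * δ * Real.exp (-L * v x) + 2 * Real.exp (-L * δ) := by
    intro x hx
    have hvx := hv0 x hx
    have e : Complex.exp (-(L + τ * Complex.I) * v x) - (Real.exp (-L * v x) : ℝ)
      = (Real.exp (-L * v x) : ℝ) * (Complex.exp (Complex.I * ((-(τ * v x) : ℝ) : ℂ)) - 1) := by
      rw [mul_sub, mul_one]; push_cast; rw [← Complex.exp_add]; congr 2; ring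
    rw [e, norm_mul, Complex.norm_real, Real.norm_of_nonneg (Real.exp_pos _).le]
    by_cases hcase : v x ≤ δ
    · have h1 := Real.norm_exp_I_mul_ofReal_sub_one_le (x := -(τ * v x))
      have h2 : ‖-(τ * v x)‖ ≤ |τ| * δ := by
        rw [norm_neg, norm_mul, Real.norm_eq_abs, Real.norm_of_nonneg hvx]
        exact mul_le_mul_of_nonneg_left hcase (abs_nonneg _)
      have h3 := mul_le_mul_of_nonneg_left (h1.trans h2) (Real.exp_pos (-L * v x)).le
      have := Real.exp_pos (-L * δ)
      linarith
    · push Not at hcase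
      have h1 : ‖Complex.exp (Complex.I * ((-(τ * v x) : ℝ) : ℂ)) - 1‖ ≤ 2 := by
        refine (norm_sub_le _ _).trans ?_
        rw [mul_comm, Complex.norm_exp_ofReal_mul_I, norm_one]; norm_num
      have h2 : Real.exp (-L * v x) ≤ Real.exp (-L * δ) := Real.exp_le_exp.2 (by nlinarith)
      have h3 := mul_le_mul h2 h1 (norm_nonneg _) (Real.exp_pos _).le
      have : 0 ≤ |τ| * δ * Real.exp (-L * v x) := by positivity
      linarith
  have hI := intervalIntegral.norm_integral_le_of_norm_le (μ := MeasureTheory.volume) zero_le_one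
    (Filter.Eventually.of_forall fun x hx => hpt x ⟨hx.1.le, hx.2⟩)
    (Continuous.intervalIntegrable (by fun_prop) _ _)
  refine hI.trans ?_
  rw [intervalIntegral.integral_add (Continuous.intervalIntegrable (by fun_prop) _ _) (by simp),
    intervalIntegral.integral_const_mul, ← hZ]
  simp only [intervalIntegral.integral_const, sub_zero, one_smul]
  have e1 : Real.exp (-L * δ) = Real.exp (-(L * (δ / 2))) * Real.exp (-L * (δ / 2)) := by
    rw [← Real.exp_add]; congr 1; ring
  rw [e1]
  have h5 : |τ| * δ ≤ ε / 2 := by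
    rw [hδd, mul_div_assoc', div_le_div_iff₀ (by positivity) (by norm_num)]
    nlinarith [abs_nonneg τ]
  have hZ0 : 0 ≤ Z := le_trans (by positivity) hl
  have h6 : Real.exp (-(L * (δ / 2))) * Real.exp (-L * (δ / 2)) ≤ ε * a / 4 * Real.exp (-L * (δ / 2)) :=
    mul_le_mul_of_nonneg_right hsmall (Real.exp_pos _).le
  have h7 := mul_le_mul_of_nonneg_right h5 hZ0
  have h8 := mul_le_mul_of_nonneg_left hl hε.le
  linarith

lemma factorM (u : ℝ → ℝ) (M : ℝ) (c : ℂ) :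
    (∫ x in (0:ℝ)..1, Complex.exp (c * u x)) =
      Complex.exp (c * M) * ∫ x in (0:ℝ)..1, Complex.exp (-c * ((M - u x : ℝ) : ℂ)) := by
  rw [← intervalIntegral.integral_const_mul]
  congr 1; ext x
  rw [← Complex.exp_add]; congr 1; push_cast; ring

lemma re_pos_aux (a b : ℂ) (p q : ℝ) (hp : 0 < p) (hq : 0 < q) (ha : ‖a - p‖ ≤ 1/4 * p) (hb : ‖b - q‖ ≤ 1/4 * q) :
    0 < (a * (starRingEnd ℂ) b).re := by
  have h1 := abs_le.1 ((Complex.abs_re_le_norm _).trans ha)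
  have h2 := abs_le.1 ((Complex.abs_im_le_norm _).trans ha)
  have h3 := abs_le.1 ((Complex.abs_re_le_norm _).trans hb)
  have h4 := abs_le.1 ((Complex.abs_im_le_norm _).trans hb)
  simp at h1 h2 h3 h4
  simp
  have h5 : (3/4*p) * (3/4*q) ≤ a.re * b.re := mul_le_mul (by linarith) (by linarith) (by positivity) (by linarith)
  have h6 : |a.im * b.im| ≤ (1/4*p) * (1/4*q) := by
    rw [abs_mul]; exact mul_le_mul (abs_le.2 ⟨by linarith, by linarith⟩) (abs_le.2 ⟨by linarith, by linarith⟩) (abs_nonneg _) (by positivity)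
  have := (abs_le.1 h6).1
  nlinarith [mul_pos hp hq]

lemma exists_c (u w : ℝ → ℝ) (hu : Continuous u) (hw : Continuous w) (hw0 : ∀ x, w x ≤ 0) (hu0 : 0 < u 0) :
    ∃ c : ℂ, ((∫ x in (0:ℝ)..1, Complex.exp (c * u x)) *
      (starRingEnd ℂ) (∫ x in (0:ℝ)..1, Complex.exp (c * w x))).re = 0 := by
  obtain ⟨x1, hx1, hm1⟩ := isCompact_Icc.exists_isMaxOn (Set.nonempty_Icc.2 zero_le_one) hu.continuousOn (s := Set.Icc (0:ℝ) 1)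
  obtain ⟨x2, hx2, hm2⟩ := isCompact_Icc.exists_isMaxOn (Set.nonempty_Icc.2 zero_le_one) hw.continuousOn (s := Set.Icc (0:ℝ) 1)
  set M := u x1
  set N := w x2
  have hMN : 0 < M - N := by
    have h1 : u 0 ≤ M := hm1 (show (0:ℝ) ∈ Set.Icc (0:ℝ) 1 by simp)
    have := hw0 x2
    show 0 < M - w x2
    linarith
  set τ := Real.pi / (M - N) with hτ
  have hL1 := lap_main (fun x => M - u x) (by fun_prop) (fun x hx => sub_nonneg.2 (hm1 hx)) x1 hx1 (sub_self _) τ (1/4) (by norm_num)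
  have hL2 := lap_main (fun x => N - w x) (by fun_prop) (fun x hx => sub_nonneg.2 (hm2 hx)) x2 hx2 (sub_self _) τ (1/4) (by norm_num)
  obtain ⟨L, h1, h2⟩ := (hL1.and hL2).exists
  set F : ℝ → ℝ := fun t => ((∫ x in (0:ℝ)..1, Complex.exp ((L + t * Complex.I) * u x)) *
      (starRingEnd ℂ) (∫ x in (0:ℝ)..1, Complex.exp ((L + t * Complex.I) * w x))).re with hF
  have hFc : Continuous F := by
    have c1 : Continuous fun t : ℝ => (∫ x in (0:ℝ)..1, Complex.exp ((L + t * Complex.I) * u x)) :=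
      intervalIntegral.continuous_parametric_intervalIntegral_of_continuous' (by fun_prop) _ _
    have c2 : Continuous fun t : ℝ => (∫ x in (0:ℝ)..1, Complex.exp ((L + t * Complex.I) * w x)) :=
      intervalIntegral.continuous_parametric_intervalIntegral_of_continuous' (by fun_prop) _ _
    exact Complex.continuous_re.comp (c1.mul (Complex.continuous_conj.comp c2))
  have pos : ∀ v : ℝ → ℝ, Continuous v → 0 < ∫ x in (0:ℝ)..1, Real.exp (v x) := by
    intro v hv
    apply intervalIntegral.intervalIntegral_pos_of_pos
    · exact Continuous.intervalIntegrable (by fun_prop) _ _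
    · intro x; positivity
    · norm_num
  have hF0 : 0 ≤ F 0 := by
    have e : ∀ v : ℝ → ℝ, (∫ x in (0:ℝ)..1, Complex.exp ((L + (0:ℝ) * Complex.I) * v x)) =
        ((∫ x in (0:ℝ)..1, Real.exp (L * v x) : ℝ) : ℂ) := by
      intro v; rw [← intervalIntegral.integral_ofReal]; congr 1; ext x; push_cast; simp
    simp only [hF, e, Complex.conj_ofReal, ← Complex.ofReal_mul, Complex.ofReal_re]
    exact (mul_pos (pos _ (by fun_prop)) (pos _ (by fun_prop))).le
  have hF1 : F τ ≤ 0 := by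
    have hp := re_pos_aux _ _ _ _ (pos _ (by fun_prop)) (pos _ (by fun_prop)) h1 h2
    simp only [hF]
    rw [factorM u M, factorM w N]
    set a := ∫ x in (0:ℝ)..1, Complex.exp (-(L + τ * Complex.I) * ((M - u x : ℝ) : ℂ))
    set b := ∫ x in (0:ℝ)..1, Complex.exp (-(L + τ * Complex.I) * ((N - w x : ℝ) : ℂ))
    have e : Complex.exp ((L + τ * Complex.I) * M) * a * (starRingEnd ℂ) (Complex.exp ((L + τ * Complex.I) * N) * b)
        = ((-Real.exp (L * (M + N)) : ℝ) : ℂ) * (a * (starRingEnd ℂ) b) := by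
      rw [map_mul, ← Complex.exp_conj]
      have : Complex.exp ((L + τ * Complex.I) * M) * Complex.exp ((starRingEnd ℂ) ((L + τ * Complex.I) * N)) =
        ((-Real.exp (L * (M + N)) : ℝ) : ℂ) := by
        rw [← Complex.exp_add]
        have e2 : (L + τ * Complex.I) * M + (starRingEnd ℂ) ((L + τ * Complex.I) * N) =
          ((L * (M + N) : ℝ) : ℂ) + Real.pi * Complex.I := by
          have : (Real.pi : ℂ) = τ * (M - N) := by
            rw [← Complex.ofReal_sub, ← Complex.ofReal_mul]; congr 1; rw [hτ]; field_simp
          rw [this]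
          simp
          ring
        rw [e2, Complex.exp_add, Complex.exp_pi_mul_I]
        push_cast; ring
      rw [← this]; ring
    rw [e, Complex.re_ofReal_mul]
    have := Real.exp_pos (L * (M + N))
    nlinarith
  obtain ⟨t, ht⟩ := mem_range_of_exists_le_of_exists_ge hFc ⟨τ, hF1⟩ ⟨0, hF0⟩
  exact ⟨L + t * Complex.I, ht⟩

lemma exists_lam (A B : ℂ) (h : (A * (starRingEnd ℂ) B).re = 0) :
    ∃ l : ℂ, l ≠ 0 ∧ (l * A).re = 0 ∧ (l * B).im = 0 := by
  by_cases hB : B = 0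
  · by_cases hA : A = 0
    · exact ⟨1, by simp [hA, hB]⟩
    · refine ⟨Complex.I * (starRingEnd ℂ) A, by simp [hA], ?_, by simp [hB]⟩
      simp; ring
  · refine ⟨(starRingEnd ℂ) B, by simp [hB], by rw [mul_comm]; exact h, ?_⟩
    simp; ring

lemma prim_convex (S : Set ℂ) (hS : Convex ℝ S) (hSo : IsOpen S) (f : ℂ → ℂ)
    (hf : ∀ z ∈ S, DifferentiableAt ℂ f z) : ∃ F : ℂ → ℂ, ∀ z ∈ S, HasDerivAt F (f z) z := by
  have hd : ∀ z ∈ S, HasFDerivAt (fun z => ContinuousLinearMap.toSpanSingleton ℂ (f z))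
      (((ContinuousLinearMap.toSpanSingletonCLE (𝕜 := ℂ) (E := ℂ)).toContinuousLinearMap).comp
        (ContinuousLinearMap.toSpanSingleton ℂ (deriv f z))) z := by
    intro z hz
    exact (ContinuousLinearMap.toSpanSingletonCLE (𝕜 := ℂ) (E := ℂ)).toContinuousLinearMap.hasFDerivAt.comp z
      (hf z hz).hasDerivAt.hasFDerivAt
  obtain ⟨F, hF⟩ := hS.exists_forall_hasFDerivAt_of_fderiv_symmetric (𝕜 := ℂ)
    (ω := fun z => ContinuousLinearMap.toSpanSingleton ℂ (f z)) hSo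
    (fun z hz => ((hd z hz).restrictScalars ℝ).differentiableAt.differentiableWithinAt)
    (by
      intro a ha x y
      rw [((hd a ha).restrictScalars ℝ).fderiv]
      simp; ring)
  refine ⟨F, fun z hz => ?_⟩
  have := (hF z hz).hasDerivAt
  simpa using this

lemma const_on_convex (S : Set ℂ) (hS : Convex ℝ S) (g : ℂ → ℂ)
    (hg : ∀ z ∈ S, HasDerivAt g 0 z) (z w : ℂ) (hz : z ∈ S) (hw : w ∈ S) : g z = g w := by
  have := hS.norm_image_sub_le_of_norm_hasDerivWithin_le (C := 0) (f := g) (f' := fun _ => 0)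
    (fun x hx => (hg x hx).hasDerivWithinAt) (by simp) hw hz
  simp at this
  exact sub_eq_zero.1 this

lemma sin_pos_strip {t : ℝ} (h0 : 0 < t) (h1 : t < 1) : 0 < Real.sin (Real.pi * t) := by
  apply Real.sin_pos_of_pos_of_lt_pi
  · have := Real.pi_pos; positivity
  · nlinarith [Real.pi_pos]

lemma int_per {g : ℂ → ℝ} {P : ℂ → Prop} {d : ℂ} (hP : ∀ z (m : ℤ), P z → P (z + m * d))
    (hg : ∀ z, P z → g (z + d) = g z) (z : ℂ) (hz : P z) (m : ℤ) : g (z + m * d) = g z := by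
  have h : Function.Periodic (fun n : ℤ => g (z + n * d)) 1 := by
    intro n
    have := hg (z + n * d) (hP z n hz)
    simp only
    rw [← this]; congr 1; push_cast; ring
  have := h.int_mul m 0
  simpa using this

lemma exists_T (f : ℂ → ℂ) (hf : ∀ z, 0 < sF z → DifferentiableAt ℂ f z)
    (h1 : ∀ z, f (z + 1) = f z) (hI : ∀ z, f (z + Complex.I) = f z)
    (hA : (∫ x in (0:ℝ)..1, f (x + (1/2) * Complex.I)).re = 0)
    (hB : (∫ y in (0:ℝ)..1, f (1/2 + y * Complex.I)).im = 0) :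
    ∃ T : ℂ → ℝ, (∀ z, T (z + 1) = T z) ∧ (∀ z, T (z + Complex.I) = T z) ∧
      ∀ z, 0 < sF z → ∃ F : ℂ → ℂ, ∀ᶠ w in nhds z, HasDerivAt F (f w) w ∧ T w = (F w).re := by
  have f1 : ∀ z (n : ℤ), f (z + n) = f z := by
    intro z n
    have := (show Function.Periodic f 1 from h1).int_mul n z
    simpa using this
  have fI : ∀ z (n : ℤ), f (z + n * Complex.I) = f z := by
    intro z n
    exact (show Function.Periodic f Complex.I from hI).int_mul n z
  set Sx : Set ℂ := {z | 0 < z.re ∧ z.re < 1} with hSx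
  set Sy : Set ℂ := {z | 0 < z.im ∧ z.im < 1} with hSy
  have Sxc : Convex ℝ Sx := (convex_halfSpace_re_gt 0).inter (convex_halfSpace_re_lt 1)
  have Syc : Convex ℝ Sy := (convex_halfSpace_im_gt 0).inter (convex_halfSpace_im_lt 1)
  have Sxo : IsOpen Sx := (isOpen_lt continuous_const Complex.continuous_re).inter (isOpen_lt Complex.continuous_re continuous_const)
  have Syo : IsOpen Sy := (isOpen_lt continuous_const Complex.continuous_im).inter (isOpen_lt Complex.continuous_im continuous_const)
  have Sxs : ∀ z ∈ Sx, 0 < sF z := by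
    intro z hz; have := sin_pos_strip hz.1 hz.2; unfold sF; positivity
  have Sys : ∀ z ∈ Sy, 0 < sF z := by
    intro z hz; have := sin_pos_strip hz.1 hz.2; unfold sF; positivity
  obtain ⟨F1, hF1⟩ := prim_convex Sx Sxc Sxo f (fun z hz => hf z (Sxs z hz))
  obtain ⟨G2, hG2⟩ := prim_convex Sy Syc Syo f (fun z hz => hf z (Sys z hz))
  set z0 : ℂ := 1/2 + (1/2) * Complex.I with hz0
  have hz0x : z0 ∈ Sx := by simp [hz0, hSx]; norm_num
  have hz0y : z0 ∈ Sy := by simp [hz0, hSy]; norm_num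
  set F2 : ℂ → ℂ := fun z => G2 z + (F1 z0 - G2 z0) with hF2d
  have hF2 : ∀ z ∈ Sy, HasDerivAt F2 (f z) z := fun z hz => (hG2 z hz).add_const _
  have hagree : ∀ z, z ∈ Sx → z ∈ Sy → F1 z = F2 z := by
    intro z hx hy
    have := const_on_convex (Sx ∩ Sy) (Sxc.inter Syc) (fun z => F1 z - F2 z)
      (fun z hz => by
        have := (hF1 z hz.1).sub (hF2 z hz.2)
        rw [sub_self] at this; exact this) z z0 ⟨hx, hy⟩ ⟨hz0x, hz0y⟩
    simp only [hF2d] at this ⊢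
    linear_combination this
  -- periods
  have hp1 : ∀ z ∈ Sx, (F1 (z + Complex.I)).re = (F1 z).re := by
    intro z hz
    have hc := const_on_convex Sx Sxc (fun z => F1 (z + Complex.I) - F1 z) (fun z hz => by
      have ha : z + Complex.I ∈ Sx := by simpa [hSx] using hz
      have := ((hF1 _ ha).comp_add_const z Complex.I).sub (hF1 z hz)
      rw [hI, sub_self] at this; exact this) z (1/2) hz (by simp [hSx]; norm_num)
    have hint : ∫ y in (0:ℝ)..1, f (1/2 + y * Complex.I) * Complex.I = F1 (1/2 + (1:ℝ) * Complex.I) - F1 (1/2 + (0:ℝ) * Complex.I) := by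
      have hm : ∀ y : ℝ, (1/2 + y * Complex.I : ℂ) ∈ Sx := by intro y; simp [hSx]; norm_num
      apply intervalIntegral.integral_eq_sub_of_hasDerivAt (f := fun y : ℝ => F1 (1/2 + y * Complex.I))
      · intro y _
        have hl : HasDerivAt (fun y : ℝ => (1/2 + y * Complex.I : ℂ)) (Complex.I) y := by
          simpa using ((Complex.ofRealCLM.hasDerivAt (x := y)).mul_const Complex.I).const_add (1/2 : ℂ)
        exact (hF1 _ (hm y)).comp y hl
      · apply Continuous.intervalIntegrable
        apply Continuous.mul _ continuous_const
        rw [continuous_iff_continuousAt]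
        intro y
        exact ContinuousAt.comp (f := fun y : ℝ => (1/2 + y * Complex.I : ℂ)) (g := f) (hf _ (Sxs _ (hm y))).continuousAt (by fun_prop)
    rw [intervalIntegral.integral_mul_const] at hint
    have h2 := congrArg Complex.re hint
    simp [hB] at h2
    have h3 := congrArg Complex.re hc
    simp at h3
    norm_num at h2 hB h3
    simp [hB] at h2
    linarith
  have hp2 : ∀ z ∈ Sy, (F2 (z + 1)).re = (F2 z).re := by
    intro z hz
    have hc := const_on_convex Sy Syc (fun z => F2 (z + 1) - F2 z) (fun z hz => by
      have ha : z + 1 ∈ Sy := by simpa [hSy] using hz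
      have := ((hF2 _ ha).comp_add_const z 1).sub (hF2 z hz)
      rw [h1, sub_self] at this; exact this) z (0 + (1/2) * Complex.I) hz (by simp [hSy]; norm_num)
    have hint : ∫ y in (0:ℝ)..1, f (y + (1/2) * Complex.I) = F2 ((1:ℝ) + (1/2) * Complex.I) - F2 ((0:ℝ) + (1/2) * Complex.I) := by
      have hm : ∀ y : ℝ, (y + (1/2) * Complex.I : ℂ) ∈ Sy := by intro y; simp [hSy]; norm_num
      apply intervalIntegral.integral_eq_sub_of_hasDerivAt (f := fun y : ℝ => F2 (y + (1/2) * Complex.I))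
      · intro y _
        have hl : HasDerivAt (fun y : ℝ => (y + (1/2) * Complex.I : ℂ)) 1 y := by
          simpa using (Complex.ofRealCLM.hasDerivAt (x := y)).add_const ((1/2) * Complex.I : ℂ)
        have := (hF2 _ (hm y)).comp y hl
        rw [mul_one] at this; exact this
      · apply Continuous.intervalIntegrable
        rw [continuous_iff_continuousAt]
        intro y
        exact ContinuousAt.comp (f := fun y : ℝ => (y + (1/2) * Complex.I : ℂ)) (g := f) (hf _ (Sys _ (hm y))).continuousAt (by fun_prop)
    have h2 := congrArg Complex.re hint
    rw [hA] at h2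
    have e : (0 + (1/2) * Complex.I + 1 : ℂ) = (1:ℝ) + (1/2) * Complex.I := by push_cast; ring
    simp only [e] at hc
    have h3 := congrArg Complex.re hc
    rw [Complex.sub_re] at h2 h3
    rw [Complex.sub_re] at h3
    rw [Complex.ofReal_zero] at h2
    linarith
  have hq1 : ∀ z ∈ Sx, ∀ m : ℤ, (F1 (z + m * Complex.I)).re = (F1 z).re := fun z hz m =>
    int_per (g := fun z => (F1 z).re) (P := fun z => z ∈ Sx) (by
      intro z m hz; simpa [hSx] using hz) hp1 z hz m
  have hq2 : ∀ z ∈ Sy, ∀ m : ℤ, (F2 (z + m)).re = (F2 z).re := fun z hz m => by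
    have := int_per (g := fun z => (F2 z).re) (P := fun z => z ∈ Sy) (d := 1) (by
      intro z m hz; simpa [hSy] using hz) hp2 z hz m
    simpa using this
  classical
  set T : ℂ → ℝ := fun z => if Int.fract z.re ≠ 0 then (F1 (z - ⌊z.re⌋)).re else
    if Int.fract z.im ≠ 0 then (F2 (z - ⌊z.im⌋ * Complex.I)).re else 0 with hT
  have memx : ∀ z : ℂ, Int.fract z.re ≠ 0 → z - ⌊z.re⌋ ∈ Sx := by
    intro z hz
    have h0 := lt_of_le_of_ne (Int.fract_nonneg z.re) (Ne.symm hz)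
    have h1 := Int.fract_lt_one z.re
    rw [Int.fract] at h0 h1
    simp only [hSx, Set.mem_ofPred_eq, Complex.sub_re, Complex.intCast_re]
    exact ⟨h0, h1⟩
  have memy : ∀ z : ℂ, Int.fract z.im ≠ 0 → z - ⌊z.im⌋ * Complex.I ∈ Sy := by
    intro z hz
    have h0 := lt_of_le_of_ne (Int.fract_nonneg z.im) (Ne.symm hz)
    have h1 := Int.fract_lt_one z.im
    rw [Int.fract] at h0 h1
    have e : (z - ⌊z.im⌋ * Complex.I).im = z.im - ⌊z.im⌋ := by simp
    simp only [hSy, Set.mem_ofPred_eq, e]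
    exact ⟨h0, h1⟩
  have hTx : ∀ z : ℂ, Int.fract z.re ≠ 0 → T z = (F1 (z - ⌊z.re⌋)).re := by
    intro z hz; simp only [hT]; rw [if_pos hz]
  have hTy : ∀ z : ℂ, Int.fract z.im ≠ 0 → T z = (F2 (z - ⌊z.im⌋ * Complex.I)).re := by
    intro z hz
    by_cases hx : Int.fract z.re = 0
    · simp only [hT]; rw [if_neg (by simpa using hx), if_pos hz]
    · rw [hTx z hx]
      have m1 := memx z hx
      have m2 := memy z hz
      have e1 := hq1 _ m1 (-⌊z.im⌋)
      have e2 := hq2 _ m2 (-⌊z.re⌋)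
      rw [← e1, ← e2]
      have e3 : z - ⌊z.re⌋ + ((-⌊z.im⌋ : ℤ) : ℂ) * Complex.I = z - ⌊z.im⌋ * Complex.I + ((-⌊z.re⌋ : ℤ) : ℂ) := by
        push_cast; ring
      rw [← e3]
      rw [hagree]
      · simpa [hSx] using m1
      · rw [e3]; simpa [hSy] using m2
  refine ⟨T, ?_, ?_, ?_⟩
  · intro z
    by_cases hx : Int.fract z.re = 0
    · by_cases hy : Int.fract z.im = 0
      · simp [hT, hx, hy]
      · rw [hTy z hy, hTy (z + 1) (by simpa using hy), ← hp2 _ (memy z hy)]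
        simp; ring_nf
    · rw [hTx z hx, hTx (z + 1) (by simpa using hx)]
      simp
  · intro z
    by_cases hx : Int.fract z.re = 0
    · by_cases hy : Int.fract z.im = 0
      · simp [hT, hx, hy]
      · rw [hTy z hy, hTy (z + Complex.I) (by simpa using hy)]
        simp; ring_nf
    · rw [hTx z hx, hTx (z + Complex.I) (by simpa using hx), ← hp1 _ (memx z hx)]
      simp; ring_nf
  · intro z hz
    by_cases hx : Int.fract z.re = 0
    · have hy : Int.fract z.im ≠ 0 := by
        intro hy
        obtain ⟨n, hn⟩ := Int.fract_eq_zero_iff.1 hx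
        obtain ⟨m, hm⟩ := Int.fract_eq_zero_iff.1 hy
        unfold sF at hz
        rw [← hn, ← hm, mul_comm, mul_comm Real.pi] at hz
        simp [Real.sin_int_mul_pi] at hz
      set m := ⌊z.im⌋
      refine ⟨fun w => F2 (w - m * Complex.I), ?_⟩
      have hopen : IsOpen {w : ℂ | w - m * Complex.I ∈ Sy} := Syo.preimage (by fun_prop)
      filter_upwards [hopen.mem_nhds (memy z hy)] with w hw
      have hw' : 0 < w.im - m ∧ w.im - m < 1 := by
        have e : (w - m * Complex.I).im = w.im - m := by simp
        have : w - m * Complex.I ∈ Sy := hw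
        simp only [hSy, Set.mem_ofPred_eq, e] at this
        exact this
      have hfl : ⌊w.im⌋ = m := Int.floor_eq_iff.2 ⟨by linarith [hw'.1], by linarith [hw'.2]⟩
      have hfr : Int.fract w.im ≠ 0 := by rw [Int.fract, hfl]; exact hw'.1.ne'
      constructor
      · have := (hF2 _ hw).comp_sub_const w (m * Complex.I)
        have e := fI (w - m * Complex.I) m
        rw [sub_add_cancel] at e
        rwa [← e] at this
      · rw [hTy w hfr, hfl]
    · set m := ⌊z.re⌋
      refine ⟨fun w => F1 (w - m), ?_⟩
      have hopen : IsOpen {w : ℂ | w - m ∈ Sx} := Sxo.preimage (by fun_prop)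
      filter_upwards [hopen.mem_nhds (memx z hx)] with w hw
      have hw' : 0 < w.re - m ∧ w.re - m < 1 := by
        have : w - m ∈ Sx := hw
        simpa [hSx] using this
      have hfl : ⌊w.re⌋ = m := Int.floor_eq_iff.2 ⟨by linarith [hw'.1], by linarith [hw'.2]⟩
      have hfr : Int.fract w.re ≠ 0 := by rw [Int.fract, hfl]; exact hw'.1.ne'
      constructor
      · have := (hF1 _ hw).comp_sub_const w m
        have e := f1 (w - m) m
        rw [sub_add_cancel] at e
        rwa [← e] at this
      · rw [hTx w hfr, hfl]

lemma sin_sq_ge (t : ℝ) : 4 * (t - round t) ^ 2 ≤ Real.sin (Real.pi * t) ^ 2 := by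
  have h := abs_sub_round t
  set d := t - round t with hd
  have e : Real.sin (Real.pi * t) ^ 2 = Real.sin (Real.pi * d) ^ 2 := by
    rw [← sin_int_shift_sq d (round t)]; congr 3; rw [hd]; ring
  rw [e]
  have hpi := Real.pi_pos
  have h2 : |Real.pi * d| ≤ Real.pi / 2 := by rw [abs_mul, abs_of_pos hpi]; nlinarith
  have h3 := Real.mul_abs_le_abs_sin h2
  rw [abs_mul, abs_of_pos hpi] at h3
  have e2 : 2 / Real.pi * (Real.pi * |d|) = 2 * |d| := by field_simp
  rw [e2] at h3
  have h4 := pow_le_pow_left₀ (by positivity) h3 2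
  rw [mul_pow, sq_abs, sq_abs] at h4
  linarith

/-- complex coordinate centred at `x₀` -/
noncomputable def zz (x₀ x : ℝ × ℝ) : ℂ := ((x.1 - x₀.1 : ℝ) : ℂ) + ((x.2 - x₀.2 : ℝ) : ℂ) * Complex.I

lemma zz_contDiff (x₀ : ℝ × ℝ) (n : WithTop ℕ∞) : ContDiff ℝ n (zz x₀) := by
  unfold zz
  have h : ∀ g : ℝ × ℝ → ℝ, ContDiff ℝ n g → ContDiff ℝ n (fun x => (g x : ℂ)) :=
    fun g hg => Complex.ofRealCLM.contDiff.comp hg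
  exact (h _ (by fun_prop)).add ((h _ (by fun_prop)).mul contDiff_const)

lemma zz_re (x₀ x : ℝ × ℝ) : (zz x₀ x).re = x.1 - x₀.1 := by simp [zz]
lemma zz_im (x₀ x : ℝ × ℝ) : (zz x₀ x).im = x.2 - x₀.2 := by simp [zz]

lemma zz_shift (x₀ x : ℝ × ℝ) (k l : ℤ) : zz x₀ (x.1 + k, x.2 + l) = zz x₀ x + k + l * Complex.I := by
  simp [zz]; ring

lemma sF_out {x₀ : ℝ × ℝ} {r₀ : ℝ} (hr : 0 < r₀) {x : ℝ × ℝ} (h : outsideBall x₀ r₀ x) :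
    4 * r₀ ^ 2 ≤ sF (zz x₀ x) := by
  have h1 := h (round (x.1 - x₀.1)) (round (x.2 - x₀.2))
  unfold nrm2 at h1
  have h2 := Real.le_sqrt' hr |>.1 h1
  simp only at h2
  unfold sF
  rw [zz_re, zz_im]
  have := sin_sq_ge (x.1 - x₀.1)
  have := sin_sq_ge (x.2 - x₀.2)
  linarith

lemma zz_deriv1 (x₀ : ℝ × ℝ) (b u : ℝ) : HasDerivAt (fun u => zz x₀ (u, b)) 1 u := by
  unfold zz
  have := ((hasDerivAt_id u).sub_const x₀.1).ofReal_comp.add_const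
    (((b - x₀.2 : ℝ) : ℂ) * Complex.I)
  simpa [Function.comp_def] using this

lemma zz_deriv2 (x₀ : ℝ × ℝ) (a u : ℝ) : HasDerivAt (fun u => zz x₀ (a, u)) Complex.I u := by
  unfold zz
  have := (((hasDerivAt_id u).sub_const x₀.2).ofReal_comp.mul_const Complex.I).const_add (((a - x₀.1 : ℝ) : ℂ))
  simpa [Function.comp_def] using this

lemma re_deriv {g : ℝ → ℂ} {g' : ℂ} {u : ℝ} (h : HasDerivAt g g' u) : HasDerivAt (fun u => (g u).re) g'.re u :=
  Complex.reCLM.hasFDerivAt.comp_hasDerivAt u h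

lemma im_deriv {g : ℝ → ℂ} {g' : ℂ} {u : ℝ} (h : HasDerivAt g g' u) : HasDerivAt (fun u => (g u).im) g'.im u :=
  Complex.imCLM.hasFDerivAt.comp_hasDerivAt u h

lemma comp1 {F : ℂ → ℂ} {F' : ℂ} (x₀ : ℝ × ℝ) (b u : ℝ) (h : HasDerivAt F F' (zz x₀ (u, b))) :
    HasDerivAt (fun u => F (zz x₀ (u, b))) F' u := by
  have := h.comp u (zz_deriv1 x₀ b u)
  rw [mul_one] at this; exact this

lemma comp2 {F : ℂ → ℂ} {F' : ℂ} (x₀ : ℝ × ℝ) (a u : ℝ) (h : HasDerivAt F F' (zz x₀ (a, u))) :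
    HasDerivAt (fun u => F (zz x₀ (a, u))) (F' * Complex.I) u :=
  h.comp u (zz_deriv2 x₀ a u)

lemma smooth_of_diff {F : ℂ → ℂ} {z : ℂ} (h : ∀ᶠ w in nhds z, DifferentiableAt ℂ F w) (n : WithTop ℕ∞) :
    ContDiffAt ℝ n F z := by
  have := (Complex.analyticAt_iff_eventually_differentiableAt.2 h).contDiffAt (n := n)
  exact this.restrict_scalars ℝ

lemma sF_contDiff (n : WithTop ℕ∞) : ContDiff ℝ n sF := by
  unfold sF
  have h1 : ContDiff ℝ n (fun z : ℂ => z.re) := Complex.reCLM.contDiff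
  have h2 : ContDiff ℝ n (fun z : ℂ => z.im) := Complex.imCLM.contDiff
  exact ((Real.contDiff_sin.comp (contDiff_const.mul h1)).pow 2).add ((Real.contDiff_sin.comp (contDiff_const.mul h2)).pow 2)

theorem statement11 (x₀ : ℝ × ℝ) (r₀ : ℝ) (hr₀ : 0 < r₀) (hr₀' : r₀ < 1 / 2) :
    ∃ θ : ℝ × ℝ → ℝ, ∃ W : ℝ × ℝ → ℝ × ℝ,
      (∀ x : ℝ × ℝ, ∀ k l : ℤ, θ (x.1 + k, x.2 + l) = θ x) ∧
      ContDiff ℝ (⊤ : ℕ∞) θ ∧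
      (∀ x, outsideBall x₀ r₀ x → lap2 θ x = 0) ∧
      (∀ x, outsideBall x₀ r₀ x → grad2 θ x ≠ 0) ∧
      (∀ x : ℝ × ℝ, ∀ k l : ℤ, W (x.1 + k, x.2 + l) = W x) ∧
      ContDiff ℝ (⊤ : ℕ∞) W ∧
      (∀ x, W x ≠ 0) ∧
      (∀ x, outsideBall x₀ r₀ x → W x = grad2 θ x) := by
  -- choice of the exponent
  have cH : Continuous (fun x : ℝ => (hF (x + (1/2) * Complex.I)).re) := by
    rw [continuous_iff_continuousAt]; intro x
    exact Complex.continuous_re.continuousAt.comp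
      (ContinuousAt.comp (f := fun x : ℝ => (x + (1/2) * Complex.I : ℂ)) (hF_diff _ (sF_H x)).continuousAt (by fun_prop))
  have cV : Continuous (fun y : ℝ => (hF (1/2 + y * Complex.I)).re) := by
    rw [continuous_iff_continuousAt]; intro x
    exact Complex.continuous_re.continuousAt.comp
      (ContinuousAt.comp (f := fun x : ℝ => (1/2 + x * Complex.I : ℂ)) (hF_diff _ (sF_V x)).continuousAt (by fun_prop))
  obtain ⟨c, hc⟩ := exists_c _ _ cH cV hF_V_nonpos hF_H_pos
  have eH : ∀ x : ℝ, (((hF (x + (1/2) * Complex.I)).re : ℝ) : ℂ) = hF (x + (1/2) * Complex.I) := fun x =>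
    Complex.ext (by simp) (by rw [hF_real_H]; simp)
  have eV : ∀ y : ℝ, (((hF (1/2 + y * Complex.I)).re : ℝ) : ℂ) = hF (1/2 + y * Complex.I) := fun x =>
    Complex.ext (by simp) (by rw [hF_real_V]; simp)
  simp only [eH, eV] at hc
  obtain ⟨l, hl0, hlA, hlB⟩ := exists_lam _ _ hc
  rw [← intervalIntegral.integral_const_mul] at hlA hlB
  set f : ℂ → ℂ := fun z => l * Complex.exp (c * hF z) with hfd
  have hf : ∀ z, 0 < sF z → DifferentiableAt ℂ f z := by
    intro z hz
    exact (((hF_diff z hz).const_mul c).cexp).const_mul l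
  obtain ⟨T, hT1, hTI, hT⟩ := exists_T f hf (fun z => by simp [hfd, hF_add_one]) (fun z => by simp [hfd, hF_add_I]) hlA hlB
  have evpos : ∀ z, 0 < sF z → ∀ᶠ w in nhds z, 0 < sF w := fun z hz =>
    sF_cont.continuousAt.eventually_const_lt hz
  set χ : ℂ → ℝ := fun z => Real.smoothTransition (sF z / r₀ ^ 2 - 1) with hχ
  have χ0 : ∀ z, sF z ≤ r₀ ^ 2 → χ z = 0 := by
    intro z hz
    apply Real.smoothTransition.zero_of_nonpos
    rw [sub_nonpos, div_le_one (by positivity)]; exact hz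
  have χ1 : ∀ z, 2 * r₀ ^ 2 ≤ sF z → χ z = 1 := by
    intro z hz
    apply Real.smoothTransition.one_of_one_le
    rw [le_sub_iff_add_le, le_div_iff₀ (by positivity)]; linarith
  have χs : ContDiff ℝ (⊤ : ℕ∞) χ :=
    Real.smoothTransition.contDiff.comp (((sF_contDiff _).div_const _).sub contDiff_const)
  have per : ∀ {α : Type} (g : ℂ → α), (∀ z, g (z + 1) = g z) → (∀ z, g (z + Complex.I) = g z) →
      ∀ (x : ℝ × ℝ) (k l : ℤ), g (zz x₀ (x.1 + k, x.2 + l)) = g (zz x₀ x) := by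
    intro α g h1 h2 x k l
    rw [zz_shift, (show Function.Periodic g Complex.I from h2).int_mul l]
    simpa using (show Function.Periodic g 1 from h1).int_mul k (zz x₀ x)
  have χ_1 : ∀ z, χ (z + 1) = χ z := fun z => by simp [hχ, sF_add_one]
  have χ_I : ∀ z, χ (z + Complex.I) = χ z := fun z => by simp [hχ, sF_add_I]
  have hzc : Continuous (zz x₀) := (zz_contDiff x₀ 0).continuous
  have near0 : ∀ x, sF (zz x₀ x) < r₀ ^ 2 → ∀ᶠ y in nhds x, χ (zz x₀ y) = 0 := by
    intro x hx
    filter_upwards [(sF_cont.comp hzc).continuousAt.eventually_lt_const hx] with y hy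
    exact χ0 _ (le_of_lt hy)
  set θ : ℝ × ℝ → ℝ := fun x => χ (zz x₀ x) * T (zz x₀ x) with hθ
  set g : ℝ × ℝ → ℂ := fun x => l * Complex.exp (χ (zz x₀ x) * (c * hF (zz x₀ x))) with hg
  have key : ∀ x, 2 * r₀ ^ 2 < sF (zz x₀ x) → grad2 θ x = ((f (zz x₀ x)).re, -(f (zz x₀ x)).im) := by
    intro x hx
    have hx0 : 0 < sF (zz x₀ x) := lt_trans (by positivity) hx
    obtain ⟨F, hF⟩ := hT _ hx0
    have hev : ∀ᶠ y in nhds x, θ y = (F (zz x₀ y)).re := by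
      filter_upwards [(sF_cont.comp hzc).continuousAt.eventually_const_lt hx, hzc.continuousAt.eventually hF] with y h1 h2
      simp only [hθ]
      rw [χ1 _ (le_of_lt h1), one_mul, h2.2]
    have hd := hF.self_of_nhds.1
    have c1 : Filter.Tendsto (fun u : ℝ => (u, x.2)) (nhds x.1) (nhds x) :=
      Continuous.tendsto' (by fun_prop) _ _ rfl
    have c2 : Filter.Tendsto (fun u : ℝ => (x.1, u)) (nhds x.2) (nhds x) :=
      Continuous.tendsto' (by fun_prop) _ _ rfl
    unfold grad2
    have e1 : (fun u => θ (u, x.2)) =ᶠ[nhds x.1] fun u => (F (zz x₀ (u, x.2))).re := c1.eventually hev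
    have e2 : (fun u => θ (x.1, u)) =ᶠ[nhds x.2] fun u => (F (zz x₀ (x.1, u))).re := c2.eventually hev
    rw [e1.deriv_eq, e2.deriv_eq]
    rw [(re_deriv (comp1 x₀ x.2 x.1 hd)).deriv, (re_deriv (comp2 x₀ x.1 x.2 hd)).deriv]
    simp
  have hr2 : 0 < r₀ ^ 2 := by positivity
  have fne : ∀ z, f z ≠ 0 := fun z => mul_ne_zero hl0 (Complex.exp_ne_zero _)
  have pairne : ∀ z : ℂ, z ≠ 0 → ((z.re, -z.im) : ℝ × ℝ) ≠ 0 := by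
    intro z hz h
    apply hz
    rw [Prod.ext_iff] at h
    exact Complex.ext h.1 (by simpa using h.2)
  refine ⟨θ, fun x => ((g x).re, -(g x).im), ?_, ?_, ?_, ?_, ?_, ?_, ?_, ?_⟩
  · exact per (fun z => χ z * T z) (fun z => by simp only [χ_1, hT1]) (fun z => by simp only [χ_I, hTI])
  · rw [contDiff_iff_contDiffAt]
    intro x
    by_cases hx : sF (zz x₀ x) < r₀ ^ 2
    · refine (contDiffAt_const (c := (0:ℝ))).congr_of_eventuallyEq ?_
      filter_upwards [near0 x hx] with y hy
      simp [hθ, hy]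
    · push Not at hx
      have hx0 : 0 < sF (zz x₀ x) := by linarith
      obtain ⟨F, hF⟩ := hT _ hx0
      have hFs : ContDiffAt ℝ (⊤ : ℕ∞) F (zz x₀ x) := smooth_of_diff (hF.mono fun w hw => hw.1.differentiableAt) _
      have hre : ContDiffAt ℝ (⊤ : ℕ∞) (fun y => (F (zz x₀ y)).re) x :=
        Complex.reCLM.contDiff.contDiffAt.comp x (hFs.comp x (zz_contDiff x₀ _).contDiffAt)
      refine ((χs.comp (zz_contDiff x₀ _)).contDiffAt.mul hre).congr_of_eventuallyEq ?_
      filter_upwards [hzc.continuousAt.eventually hF] with y hy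
      simp [hθ, hy.2]
  · intro x hx
    have hx1 : 2 * r₀ ^ 2 < sF (zz x₀ x) := by linarith [sF_out hr₀ hx]
    have hev : ∀ᶠ y in nhds x, 2 * r₀ ^ 2 < sF (zz x₀ y) := (sF_cont.comp hzc).continuousAt.eventually_const_lt hx1
    have c1 : Filter.Tendsto (fun u : ℝ => (u, x.2)) (nhds x.1) (nhds x) :=
      Continuous.tendsto' (by fun_prop) _ _ rfl
    have c2 : Filter.Tendsto (fun u : ℝ => (x.1, u)) (nhds x.2) (nhds x) :=
      Continuous.tendsto' (by fun_prop) _ _ rfl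
    have hd := (hf (zz x₀ x) (by linarith)).hasDerivAt
    have e1 : (fun u => deriv (fun u' => θ (u', x.2)) u) =ᶠ[nhds x.1] fun u => (f (zz x₀ (u, x.2))).re := by
      filter_upwards [c1.eventually hev] with u hu
      exact congrArg Prod.fst (key (u, x.2) hu)
    have e2 : (fun u => deriv (fun u' => θ (x.1, u')) u) =ᶠ[nhds x.2] fun u => -(f (zz x₀ (x.1, u))).im := by
      filter_upwards [c2.eventually hev] with u hu
      exact congrArg Prod.snd (key (x.1, u) hu)
    unfold lap2
    rw [e1.deriv_eq, e2.deriv_eq, (re_deriv (comp1 x₀ x.2 x.1 hd)).deriv, (im_deriv (comp2 x₀ x.1 x.2 hd)).fun_neg.deriv]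
    simp
  · intro x hx
    rw [key x (by linarith [sF_out hr₀ hx])]
    exact pairne _ (fne _)
  · refine per (fun z => ((l * Complex.exp (χ z * (c * hF z))).re, -(l * Complex.exp (χ z * (c * hF z))).im)) (fun z => ?_) (fun z => ?_)
    · simp only [χ_1, hF_add_one]
    · simp only [χ_I, hF_add_I]
  · have hgs : ContDiff ℝ (⊤ : ℕ∞) g := by
      have hin : ContDiff ℝ (⊤ : ℕ∞) (fun x => ((χ (zz x₀ x) : ℝ) : ℂ) * (c * hF (zz x₀ x))) := by
        rw [contDiff_iff_contDiffAt]
        intro x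
        by_cases hx : sF (zz x₀ x) < r₀ ^ 2
        · refine (contDiffAt_const (c := (0:ℂ))).congr_of_eventuallyEq ?_
          filter_upwards [near0 x hx] with y hy
          simp [hy]
        · push Not at hx
          have hx0 : 0 < sF (zz x₀ x) := by linarith
          have hFs : ContDiffAt ℝ (⊤ : ℕ∞) hF (zz x₀ x) := smooth_of_diff ((evpos _ hx0).mono fun w hw => hF_diff w hw) _
          have h2 : ContDiffAt ℝ (⊤ : ℕ∞) (fun x => ((χ (zz x₀ x) : ℝ) : ℂ)) x :=
            (Complex.ofRealCLM.contDiff.comp (χs.comp (zz_contDiff x₀ _))).contDiffAt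
          exact h2.mul (contDiffAt_const.mul (hFs.comp x (zz_contDiff x₀ _).contDiffAt))
      exact contDiff_const.mul hin.cexp
    exact (Complex.reCLM.contDiff.comp hgs).prodMk (Complex.imCLM.contDiff.comp hgs).neg
  · intro x
    exact pairne _ (mul_ne_zero hl0 (Complex.exp_ne_zero _))
  · intro x hx
    have h4 := sF_out hr₀ hx
    rw [key x (by linarith)]
    have : g x = f (zz x₀ x) := by
      simp only [hg, hfd]; rw [χ1 _ (by linarith)]; simp
    simp only [this]
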